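/- Let G be a graph on n vertices, k ≥ 5 an integer, and let C be an induced cycle of length k in G. Then the sum of the weights w(D) over the 2k good k-tuples D whose underlying induced cycle is C (one tuple for each choice of starting vertex and traversal direction of C) is at least k^k/(2 n^k). -/

import Mathlib

open Finset
open scoped Classical

/-- Index transposition swapping 0 and 1. -/
def swap01 (i : ℕ) : ℕ := if i = 0 then 1 else if i = 1 then 0 else i

/-- `y 0, y 1, …, y (k-1)` is an induced cycle of length `k` in `G`. -/
def IsInducedCycle {V : Type*} (G : SimpleGraph V) (k : ℕ) (y : ℕ → V) : Prop :=
  (∀ i < k, ∀ j < k, y i = y j → i = j) ∧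
  ∀ i < k, ∀ j < k, (G.Adj (y i) (y j) ↔ (i + 1) % k = j ∨ (j + 1) % k = i)

/-- `y 0, y 1, …, y (m-1)` is an induced path on `m` vertices in `G`. -/
def IsInducedPath {V : Type*} (G : SimpleGraph V) (m : ℕ) (y : ℕ → V) : Prop :=
  (∀ i < m, ∀ j < m, y i = y j → i = j) ∧
  ∀ i < m, ∀ j < m, (G.Adj (y i) (y j) ↔ i + 1 = j ∨ j + 1 = i)

/-- `(z 0, …, z (k-1))` is a good k-tuple: `z 1, z 0, z 2, …, z (k-1)` is an induced cycle. -/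
def IsGoodTuple {V : Type*} (G : SimpleGraph V) (k : ℕ) (z : ℕ → V) : Prop :=
  IsInducedCycle G k (fun i => z (swap01 i))

/-- The sequence `z 1, z 0, z 2, …, z (i-2), x` of length `i`. -/
def extSeq {V : Type*} (z : ℕ → V) (i : ℕ) (x : V) : ℕ → V :=
  fun p => if p = i - 1 then x else z (swap01 p)

/-- The quantity `n_i` associated with the (prefix of the) tuple `z`. -/
noncomputable def nq {V : Type*} (G : SimpleGraph V) (k : ℕ) (z : ℕ → V) (i : ℕ) : ℕ :=
  if i = 1 then Nat.card V
  else if i = 2 then Nat.card {x : V // G.Adj (z 0) x}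
  else if i = 3 then Nat.card {x : V // G.Adj (z 0) x ∧ ¬ G.Adj (z 1) x}
  else if i < k then Nat.card {x : V // IsInducedPath G i (extSeq z i x)}
  else Nat.card {x : V // IsInducedCycle G k (extSeq z k x)}

/-- The weight `w(D) = ∏_{i=1}^k 1/n_i` of a tuple. -/
noncomputable def wt {V : Type*} (G : SimpleGraph V) (k : ℕ) (z : ℕ → V) : ℝ :=
  ∏ i ∈ Finset.Icc 1 k, ((nq G k z i : ℝ))⁻¹

/-- View a `Fin k`-tuple as an `ℕ`-indexed tuple. -/
def tupFun {V : Type*} {k : ℕ} (hk : 0 < k) (z : Fin k → V) : ℕ → V :=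
  fun i => z ⟨i % k, Nat.mod_lt i hk⟩

/-- The good tuple `D_j = (v_j, v_{j-1}, v_{j+1}, …, v_{j+k-2})` (0-indexed `j`, indices mod `k`). -/
def Dtup {V : Type*} (k : ℕ) (v : ℕ → V) (j : ℕ) : ℕ → V :=
  fun p => if p = 0 then v (j % k)
    else if p = 1 then v ((j + k - 1) % k)
    else v ((j + p - 1) % k)

/-
A uniformly random starting point on the cycle makes the `n_i` small on average, and AM–GM turns
this into a lower bound for the sum of the weights `∏ 1 / n_i`.

Fix a direction and let `u : ZMod k → V` be the cycle; the tuple starting at `a` is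
`u (a + 1), u a, u (a + 2), …, u (a + k - 1)`. A vertex `x` with neighbours `S` on the cycle is
counted by `n_i`, `3 ≤ i < k`, only if the first point of `S` at or after `a` is `a + (i - 2)`;
up to a rotation the same holds for `n_2`; and it is counted by `n_k` only if
`{a, a - 2} ⊆ S ⊆ {a, a - 1, a - 2}`. Give `n_1` the weight `1 / k`, `n_2` and `n_3` the weight
`1 / 2`, and every other `n_i` the weight `1`. Then `x` contributes `1` through `n_1` and at most
`k - 1` through the others, over all starting points together: each starting point has at most one
first hit, the points of `S ∪ (S - 1)` (at least two of them if `S` is nonempty, at least four if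
some `n_k` counts `x`) lose `1 / 2`, and at most one `n_k` counts `x`. So the `k ^ 2` weighted
quantities have mean at most `n / k`, and AM–GM bounds the sum of the `k` products from below by
`k * (k / n) ^ k` times the product `1 / (4 * k)` of the weights. Adding both directions gives the
claim.
-/

section AMGM

variable {ι κ : Type*}

lemma one_add_sum_one_sub_le_prod_inv {s : Finset κ} {t : κ → ℝ} (ht : ∀ i ∈ s, 0 < t i) :
    1 + ∑ i ∈ s, (1 - t i) ≤ ∏ i ∈ s, (t i)⁻¹ := by
  have hlog : ∑ i ∈ s, (1 - t i) ≤ Real.log (∏ i ∈ s, (t i)⁻¹) := by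
    rw [Real.log_prod fun i hi => (inv_pos.2 (ht i hi)).ne']
    refine sum_le_sum fun i hi => ?_
    rw [Real.log_inv]
    linarith [Real.log_le_sub_one_of_pos (ht i hi)]
  linarith [Real.log_le_sub_one_of_pos (prod_pos fun i hi => inv_pos.2 (ht i hi))]

lemma card_mul_inv_pow_le_sum_prod_inv {A : Finset ι} {s : Finset κ} {t : ι → κ → ℝ} {M : ℝ}
    (hM : 0 < M) (ht : ∀ a ∈ A, ∀ i ∈ s, 0 < t a i)
    (hsum : ∑ a ∈ A, ∑ i ∈ s, t a i ≤ #A * (#s * M)) :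
    #A * M⁻¹ ^ #s ≤ ∑ a ∈ A, ∏ i ∈ s, (t a i)⁻¹ := by
  have hmean : 0 ≤ ∑ a ∈ A, ∑ i ∈ s, (1 - t a i / M) := by
    simp only [sum_sub_distrib, sum_const, nsmul_eq_mul, mul_one, ← sum_div, sub_nonneg]
    rw [div_le_iff₀ hM]
    linarith
  have hprod : ∀ a ∈ A,
      M⁻¹ ^ #s * (1 + ∑ i ∈ s, (1 - t a i / M)) ≤ ∏ i ∈ s, (t a i)⁻¹ := by
    intro a ha
    calc M⁻¹ ^ #s * (1 + ∑ i ∈ s, (1 - t a i / M))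
        ≤ M⁻¹ ^ #s * ∏ i ∈ s, (t a i / M)⁻¹ := by
          gcongr
          exact one_add_sum_one_sub_le_prod_inv fun i hi => div_pos (ht a ha i hi) hM
      _ = ∏ i ∈ s, (t a i)⁻¹ := by
          rw [← prod_const, ← prod_mul_distrib]
          exact prod_congr rfl fun i _ => by field_simp
  calc #A * M⁻¹ ^ #s
      ≤ M⁻¹ ^ #s * (#A + ∑ a ∈ A, ∑ i ∈ s, (1 - t a i / M)) := by
        rw [mul_comm]
        gcongr
        exact le_add_of_nonneg_right hmean
    _ = ∑ a ∈ A, M⁻¹ ^ #s * (1 + ∑ i ∈ s, (1 - t a i / M)) := by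
        simp only [← mul_sum, sum_add_distrib, sum_const, nsmul_eq_mul, mul_one]
    _ ≤ ∑ a ∈ A, ∏ i ∈ s, (t a i)⁻¹ := sum_le_sum hprod

end AMGM

lemma sum_ite_le_of_unique {ι : Type*} {s : Finset ι} {P : ι → Prop} {f : ι → ℝ} {C : ℝ}
    (hP : ∀ i ∈ s, ∀ j ∈ s, P i → P j → i = j) (hC : 0 ≤ C) (hf : ∀ i ∈ s, P i → f i ≤ C) :
    ∑ i ∈ s, (if P i then f i else 0) ≤ C := by
  by_cases h : ∃ i ∈ s, P i
  · obtain ⟨i, hi, hPi⟩ := h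
    rw [sum_eq_single_of_mem i hi fun j hj hji => if_neg fun hPj => hji (hP j hj i hi hPj hPi),
      if_pos hPi]
    exact hf i hi hPi
  · push Not at h
    rwa [sum_eq_zero fun i hi => if_neg (h i hi)]

/-- The weight given to `n_i` in AM–GM, balanced so that every vertex contributes at most `k` to the
sum of the weighted `n_i` over all starting points. -/
noncomputable def posWeight (k i : ℕ) : ℝ :=
  if i = 1 then 1 / k else if i ≤ 3 then 1 / 2 else 1

lemma posWeight_pos {k : ℕ} (hk : 0 < k) (i : ℕ) : 0 < posWeight k i := by
  unfold posWeight
  split_ifs <;> positivity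

lemma prod_posWeight {k : ℕ} (hk : 3 ≤ k) : ∏ i ∈ Icc 1 k, posWeight k i = 1 / (4 * k) := by
  have hsub : Icc 1 3 ⊆ Icc 1 k := Icc_subset_Icc_right hk
  rw [← prod_subset hsub fun i hi hi' => ?_]
  · rw [show Icc 1 3 = ({1, 2, 3} : Finset ℕ) from rfl]
    norm_num [posWeight]
  · rw [mem_Icc] at hi hi'
    rw [posWeight, if_neg (by omega), if_neg (by omega)]

section CyclicSets

variable {k : ℕ} {S : Set (ZMod k)} {a b : ZMod k}

/-- Going up from `a`, the first element of `S` is met after exactly `t` steps. -/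
def FirstHit (S : Set (ZMod k)) (a : ZMod k) (t : ℕ) : Prop :=
  a + t ∈ S ∧ ∀ s < t, a + s ∉ S

/-- A vertex with neighbours `S` on the cycle can stand in for the vertex in position `a - 1`,
which lies between the two ends of the path `a, a + 1, …, a + (k - 2)`. -/
def Closes (S : Set (ZMod k)) (a : ZMod k) : Prop :=
  a ∈ S ∧ a - 2 ∈ S ∧ ∀ b ∈ S, b = a ∨ b = a - 1 ∨ b = a - 2

/-- The condition which counting by `n_i`, for the tuple starting at `a`, imposes on the set `S` of
cycle positions adjacent to the counted vertex. -/
def IsCandidate (S : Set (ZMod k)) (a : ZMod k) (i : ℕ) : Prop :=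
  if i = 1 then True
  else if i = 2 then a + 1 ∈ S
  else if i < k then FirstHit S a (i - 2)
  else Closes S a

lemma FirstHit.unique {s t : ℕ} (hs : FirstHit S a s) (ht : FirstHit S a t) : s = t := by
  rcases lt_trichotomy s t with h | h | h
  · exact absurd hs.1 (ht.2 s h)
  · exact h
  · exact absurd ht.1 (hs.2 t h)

lemma zmod_natCast_ne_zero_of_lt {m : ℕ} (hm : 0 < m) (hmk : m < k) : (m : ZMod k) ≠ 0 := by
  rw [Ne, ZMod.natCast_eq_zero_iff]
  exact Nat.not_dvd_of_pos_of_lt hm hmk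

lemma Closes.unique (hk : 5 ≤ k) (ha : Closes S a) (hb : Closes S b) : a = b := by
  have h3 : (3 : ZMod k) ≠ 0 :=
    mod_cast zmod_natCast_ne_zero_of_lt (m := 3) (by omega) (by omega)
  have h4 : (4 : ZMod k) ≠ 0 :=
    mod_cast zmod_natCast_ne_zero_of_lt (m := 4) (by omega) (by omega)
  have hb0 := ha.2.2 b hb.1
  have hb2 := ha.2.2 (b - 2) hb.2.1
  grind

lemma le_card_of_forall_sub_mem {A : Finset (ZMod k)} {m : ℕ} (hm : m ≤ k)
    (hA : ∀ t < m, a - (t : ZMod k) ∈ A) : m ≤ #A := by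
  have hinj : Set.InjOn (fun t : ℕ => a - (t : ZMod k)) (range m) := by
    intro s hs t ht hst
    rw [coe_range, Set.mem_Iio] at hs ht
    exact CharP.natCast_injOn_Iio (ZMod k) k (hs.trans_le hm) (ht.trans_le hm)
      (sub_right_injective hst)
  simpa using card_le_card_of_injOn _ (fun t ht => hA t (mem_range.1 ht)) hinj

lemma sum_firstHit_le (S : Set (ZMod k)) (a : ZMod k) :
    ∑ i ∈ Ico 2 k, (if FirstHit S a (i - 2) then posWeight k i else 0)
      ≤ if a ∈ S ∨ a + 1 ∈ S then 1 / 2 else 1 := by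
  refine sum_ite_le_of_unique (fun i hi j hj hPi hPj => ?_) (by positivity) fun i hi hPi => ?_
  · have := hPi.unique hPj
    rw [mem_Ico] at hi hj
    omega
  · rw [mem_Ico] at hi
    unfold posWeight
    rw [if_neg (by omega)]
    split_ifs with h3 hnear hnear
    · exact le_rfl
    · norm_num
    · rcases hnear with h | h
      · exact absurd (by simpa using h) (hPi.2 0 (by omega))
      · exact absurd (by simpa using h) (hPi.2 1 (by omega))
    · exact le_rfl

variable [NeZero k]

lemma sum_sum_firstHit_le (S : Set (ZMod k)) :
    ∑ a, ∑ i ∈ Ico 2 k, (if FirstHit S a (i - 2) then posWeight k i else 0)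
      ≤ k - (#{a | a ∈ S ∨ a + 1 ∈ S} : ℝ) / 2 := by
  calc _ ≤ ∑ a, (1 - if a ∈ S ∨ a + 1 ∈ S then (1 / 2 : ℝ) else 0) := by
        refine sum_le_sum fun a _ => (sum_firstHit_le S a).trans (le_of_eq ?_)
        split_ifs <;> norm_num
    _ = _ := by
        rw [sum_sub_distrib, ← sum_filter]
        simp [ZMod.card, div_eq_mul_inv]

lemma sum_closes_le_one (hk : 5 ≤ k) (S : Set (ZMod k)) :
    ∑ a, (if Closes S a then (1 : ℝ) else 0) ≤ 1 :=
  sum_ite_le_of_unique (fun _ _ _ _ ha hb => ha.unique hk hb) zero_le_one fun _ _ _ => le_rfl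

lemma two_le_card_near (hk : 2 ≤ k) (ha : a ∈ S) : 2 ≤ #{b | b ∈ S ∨ b + 1 ∈ S} := by
  refine le_card_of_forall_sub_mem (a := a) hk fun t ht => ?_
  rw [mem_filter_univ]
  interval_cases t <;> simp [ha]

lemma Closes.four_le_card_near (hk : 4 ≤ k) (ha : Closes S a) :
    4 ≤ #{b | b ∈ S ∨ b + 1 ∈ S} := by
  refine le_card_of_forall_sub_mem (a := a) hk fun t ht => ?_
  have h3 : a - 3 + 1 = a - 2 := by ring
  rw [mem_filter_univ]
  interval_cases t <;> simp [ha.1, ha.2.1, h3]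

lemma sum_firstHit_add_sum_closes_le (hk : 5 ≤ k) (S : Set (ZMod k)) :
    ∑ a, ∑ i ∈ Ico 2 k, (if FirstHit S a (i - 2) then posWeight k i else 0)
      + ∑ a, (if Closes S a then (1 : ℝ) else 0) ≤ k - 1 := by
  have hF := sum_sum_firstHit_le S
  by_cases hcl : ∃ a, Closes S a
  · obtain ⟨a, ha⟩ := hcl
    have hnear : (4 : ℝ) ≤ #{b | b ∈ S ∨ b + 1 ∈ S} := mod_cast ha.four_le_card_near (by omega)
    linarith [sum_closes_le_one hk S]
  · push Not at hcl
    simp only [hcl, if_false, sum_const_zero, add_zero]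
    rcases S.eq_empty_or_nonempty with rfl | ⟨a, ha⟩
    · have hk1 : (1 : ℝ) ≤ k := mod_cast (show 1 ≤ k by omega)
      simpa [FirstHit] using hk1
    · have hnear : (2 : ℝ) ≤ #{b | b ∈ S ∨ b + 1 ∈ S} := mod_cast two_le_card_near (by omega) ha
      linarith

lemma sum_isCandidate_eq (hk : 4 ≤ k) (S : Set (ZMod k)) :
    ∑ a, ∑ i ∈ Icc 1 k, (if IsCandidate S a i then posWeight k i else 0)
      = 1 + (∑ a, ∑ i ∈ Ico 2 k, (if FirstHit S a (i - 2) then posWeight k i else 0)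
        + ∑ a, (if Closes S a then 1 else 0)) := by
  have hrot : ∑ a : ZMod k, (if a + 1 ∈ S then (1 / 2 : ℝ) else 0)
      = ∑ a : ZMod k, if a ∈ S then 1 / 2 else 0 :=
    Equiv.sum_comp (Equiv.addRight (1 : ZMod k)) fun a => if a ∈ S then (1 / 2 : ℝ) else 0
  have hcand : ∀ a, ∑ i ∈ Icc 1 k, (if IsCandidate S a i then posWeight k i else 0)
      = (k : ℝ)⁻¹ + ((if a + 1 ∈ S then 1 / 2 else 0)
        + (∑ i ∈ Ico 3 k, (if FirstHit S a (i - 2) then posWeight k i else 0)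
          + if Closes S a then 1 else 0)) := by
    intro a
    have hmid : ∀ i ∈ Ico 3 k, (if IsCandidate S a i then posWeight k i else 0)
        = if FirstHit S a (i - 2) then posWeight k i else 0 := by
      intro i hi
      rw [mem_Ico] at hi
      simp only [IsCandidate, show i ≠ 1 by omega, show i ≠ 2 by omega, hi.2, if_false, if_true]
    rw [← Ico_add_one_right_eq_Icc, sum_eq_sum_Ico_succ_bot (by omega),
      sum_eq_sum_Ico_succ_bot (by omega), sum_Ico_succ_top (by omega), sum_congr rfl hmid]
    simp [IsCandidate, posWeight, show k ≠ 1 by omega, show k ≠ 2 by omega, show ¬k ≤ 3 by omega]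
  have hhit : ∀ a, ∑ i ∈ Ico 2 k, (if FirstHit S a (i - 2) then posWeight k i else 0)
      = (if a ∈ S then 1 / 2 else 0)
        + ∑ i ∈ Ico 3 k, (if FirstHit S a (i - 2) then posWeight k i else 0) := by
    intro a
    rw [sum_eq_sum_Ico_succ_bot (by omega)]
    simp [FirstHit, posWeight]
  simp only [hcand, hhit, sum_add_distrib, hrot, add_assoc]
  simp [ZMod.card]

lemma sum_isCandidate_le (hk : 5 ≤ k) (S : Set (ZMod k)) :
    ∑ a, ∑ i ∈ Icc 1 k, (if IsCandidate S a i then posWeight k i else 0) ≤ k := by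
  rw [sum_isCandidate_eq (by omega)]
  linarith [sum_firstHit_add_sum_closes_le hk S]

end CyclicSets

section Tuples

variable {V : Type*} {G : SimpleGraph V} {k : ℕ} {z : ℕ → V}

lemma swap01_swap01 (i : ℕ) : swap01 (swap01 i) = i := by
  grind [swap01]

lemma swap01_lt {i : ℕ} (hk : 2 ≤ k) (hi : i < k) : swap01 i < k := by
  grind [swap01]

lemma extSeq_last (z : ℕ → V) (i : ℕ) (x : V) : extSeq z i x (i - 1) = x :=
  if_pos rfl

lemma extSeq_of_lt {i p : ℕ} (x : V) (hp : p < i - 1) : extSeq z i x p = z (swap01 p) :=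
  if_neg hp.ne

lemma extSeq_self (z : ℕ → V) (i : ℕ) :
    extSeq z i (z (swap01 (i - 1))) = fun p => z (swap01 p) := by
  ext p
  unfold extSeq
  split_ifs with hp
  · rw [hp]
  · rfl

lemma IsInducedCycle.isInducedPath {y : ℕ → V} {m : ℕ} (hy : IsInducedCycle G k y) (hm : m < k) :
    IsInducedPath G m y := by
  refine ⟨fun i hi j hj => hy.1 i (hi.trans hm) j (hj.trans hm), fun i hi j hj => ?_⟩
  rw [hy.2 i (hi.trans hm) j (hj.trans hm), Nat.mod_eq_of_lt (by omega),
    Nat.mod_eq_of_lt (by omega)]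

lemma IsGoodTuple.adj (hk : 2 ≤ k) (hz : IsGoodTuple G k z) : G.Adj (z 0) (z 1) :=
  (hz.2 1 (by omega) 0 (by omega)).2 (Or.inr (Nat.mod_eq_of_lt (by omega)))

/-- Each `n_i` counts an entry of the tuple itself. -/
lemma nq_pos [Finite V] (hk : 2 ≤ k) (hz : IsGoodTuple G k z) (i : ℕ) : 0 < nq G k z i := by
  unfold nq
  split_ifs with h1 h2 h3 h4 <;> refine Nat.card_pos_iff.2 ⟨?_, inferInstance⟩
  · exact ⟨z 0⟩
  · exact ⟨z 1, hz.adj hk⟩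
  · exact ⟨z 1, hz.adj hk, G.irrefl⟩
  · refine ⟨z (swap01 (i - 1)), ?_⟩
    rw [extSeq_self]
    exact IsInducedCycle.isInducedPath hz h4
  · refine ⟨z (swap01 (k - 1)), ?_⟩
    rw [extSeq_self]
    exact hz

lemma wt_nonneg (G : SimpleGraph V) (k : ℕ) (z : ℕ → V) : 0 ≤ wt G k z :=
  prod_nonneg fun _ _ => by positivity

/-- The entries `z 1, z 0, z 2, …, z (k - 1)` of the tuple `z` are the vertices
`u a, u (a + 1), u (a + 2), …, u (a + (k - 1))` of the cyclic sequence `u`, in this order. -/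
def ReadsFrom (u : ZMod k → V) (a : ZMod k) (z : ℕ → V) : Prop :=
  ∀ i < k, z (swap01 i) = u (a + i)

variable {u : ZMod k → V} {a : ZMod k}

lemma ReadsFrom.zero (hk : 2 ≤ k) (hz : ReadsFrom u a z) : z 0 = u (a + 1) := by
  simpa [swap01] using hz 1 (by omega)

lemma ReadsFrom.one (hk : 0 < k) (hz : ReadsFrom u a z) : z 1 = u a := by
  simpa [swap01] using hz 0 hk

lemma ReadsFrom.extSeq_apply (hz : ReadsFrom u a z) {i p : ℕ} (x : V) (hi : i ≤ k)
    (hp : p < i - 1) : extSeq z i x p = u (a + p) := by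
  rw [extSeq_of_lt x hp, hz p (by omega)]

lemma ReadsFrom.firstHit_of_isInducedPath (hz : ReadsFrom u a z) {i : ℕ} {x : V} (hi : 2 ≤ i)
    (hik : i ≤ k) (hx : IsInducedPath G i (extSeq z i x)) :
    FirstHit (u ⁻¹' G.neighborSet x) a (i - 2) := by
  have hadj : ∀ t < i - 1, (a + t ∈ u ⁻¹' G.neighborSet x ↔ t = i - 2) := by
    intro t ht
    have := hx.2 (i - 1) (by omega) t (by omega)
    rw [extSeq_last, hz.extSeq_apply x hik ht] at this
    rw [Set.mem_preimage, SimpleGraph.mem_neighborSet, this]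
    omega
  exact ⟨(hadj _ (by omega)).2 rfl, fun s hs => by rw [hadj s (by omega)]; omega⟩

lemma ReadsFrom.closes_of_isInducedCycle (hk : 2 ≤ k) (hz : ReadsFrom u a z) {x : V}
    (hx : IsInducedCycle G k (extSeq z k x)) : Closes (u ⁻¹' G.neighborSet x) a := by
  have : NeZero k := ⟨by omega⟩
  have hadj : ∀ t < k - 1, (a + t ∈ u ⁻¹' G.neighborSet x ↔ t = 0 ∨ t = k - 2) := by
    intro t ht
    have := hx.2 (k - 1) (by omega) t (by omega)
    rw [extSeq_last, hz.extSeq_apply x le_rfl ht, Nat.sub_add_cancel (by omega), Nat.mod_self,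
      Nat.mod_eq_of_lt (by omega)] at this
    rw [Set.mem_preimage, SimpleGraph.mem_neighborSet, this]
    omega
  have hlast : a + ((k - 2 : ℕ) : ZMod k) = a - 2 := by
    rw [Nat.cast_sub hk]
    simp [sub_eq_add_neg]
  refine ⟨by simpa using (hadj 0 (by omega)).2 (Or.inl rfl),
    hlast ▸ (hadj _ (by omega)).2 (Or.inr rfl), fun b hb => ?_⟩
  obtain ⟨t, htk, rfl⟩ : ∃ t < k, a + (t : ZMod k) = b :=
    ⟨(b - a).val, ZMod.val_lt _, by simp⟩
  rcases (show t < k - 1 ∨ t = k - 1 by omega) with ht | rfl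
  · rcases (hadj t ht).1 hb with rfl | rfl
    · simp
    · exact Or.inr (Or.inr hlast)
  · right; left
    rw [Nat.cast_sub (by omega)]
    simp [sub_eq_add_neg]

lemma natCard_subtype_le_card_filter [Fintype V] {P Q : V → Prop} (h : ∀ x, P x → Q x) :
    Nat.card {x // P x} ≤ #{x | Q x} := by
  rw [← Fintype.card_subtype, ← Nat.card_eq_fintype_card]
  exact Nat.card_mono (Set.toFinite {x | Q x}) h

lemma ReadsFrom.nq_le [Fintype V] (hk : 4 ≤ k) (hz : ReadsFrom u a z) {i : ℕ} (hi : 1 ≤ i) :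
    nq G k z i ≤ #{x | IsCandidate (u ⁻¹' G.neighborSet x) a i} := by
  have h0 : z 0 = u (a + 1) := hz.zero (by omega)
  have h1 : z 1 = u a := hz.one (by omega)
  unfold nq IsCandidate
  split_ifs with hi1 hi2 hi3 hik hik
  · simp
  · exact natCard_subtype_le_card_filter fun x hx => by simpa [h0, G.adj_comm] using hx
  · refine natCard_subtype_le_card_filter fun x hx => ?_
    subst hi3
    simpa [FirstHit, h0, h1, G.adj_comm] using hx
  · omega
  · exact natCard_subtype_le_card_filter fun x hx =>
      hz.firstHit_of_isInducedPath (by omega) hik.le hx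
  · exact natCard_subtype_le_card_filter fun x hx => hz.closes_of_isInducedCycle (by omega) hx

lemma sum_posWeight_mul_nq_le [Fintype V] [NeZero k] (hk : 5 ≤ k) (G : SimpleGraph V)
    {z : ZMod k → ℕ → V} (hz : ∀ a, ReadsFrom u a (z a)) :
    ∑ a, ∑ i ∈ Icc 1 k, posWeight k i * nq G k (z a) i ≤ k * Fintype.card V := by
  have hcount : ∀ a, ∀ i ∈ Icc 1 k, posWeight k i * nq G k (z a) i
      ≤ ∑ x, if IsCandidate (u ⁻¹' G.neighborSet x) a i then posWeight k i else 0 := by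
    intro a i hi
    rw [← sum_filter, sum_const, nsmul_eq_mul, mul_comm]
    gcongr
    · exact (posWeight_pos (by omega) i).le
    · exact (hz a).nq_le (by omega) (mem_Icc.1 hi).1
  calc ∑ a, ∑ i ∈ Icc 1 k, posWeight k i * nq G k (z a) i
      ≤ ∑ a, ∑ i ∈ Icc 1 k,
          ∑ x, if IsCandidate (u ⁻¹' G.neighborSet x) a i then posWeight k i else 0 :=
        sum_le_sum fun a _ => sum_le_sum (hcount a)
    _ = ∑ x, ∑ a, ∑ i ∈ Icc 1 k,
          if IsCandidate (u ⁻¹' G.neighborSet x) a i then posWeight k i else 0 :=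
        (sum_congr rfl fun _ _ => sum_comm).trans sum_comm
    _ ≤ ∑ _ : V, (k : ℝ) := sum_le_sum fun _ _ => sum_isCandidate_le hk _
    _ = k * Fintype.card V := by rw [sum_const, card_univ, nsmul_eq_mul, mul_comm]

end Tuples

section Cycles

variable {V : Type*} {G : SimpleGraph V} {k : ℕ}

/-- An induced cycle of length `k` in `G`, with a starting point and a direction. -/
abbrev CycleEmbedding (G : SimpleGraph V) (k : ℕ) :=
  SimpleGraph.circulantGraph ({1} : Set (ZMod k)) ↪g G

lemma circulantGraph_one_adj_natCast (hk : 2 ≤ k) (a : ZMod k) {i j : ℕ} (hi : i < k)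
    (hj : j < k) :
    (SimpleGraph.circulantGraph ({1} : Set (ZMod k))).Adj (a + i) (a + j)
      ↔ (i + 1) % k = j ∨ (j + 1) % k = i := by
  have hone : (1 : ZMod k) ≠ 0 := mod_cast zmod_natCast_ne_zero_of_lt one_pos hk
  have hsucc : ∀ {i j : ℕ}, j < k → ((i + 1) % k = j ↔ (j : ZMod k) - i = 1) := by
    intro i j hj
    rw [sub_eq_iff_eq_add', ← Nat.cast_succ, ZMod.natCast_eq_natCast_iff', Nat.mod_eq_of_lt hj,
      eq_comm]
  rw [SimpleGraph.circulantGraph_adj, hsucc hj, hsucc hi]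
  simp only [Set.mem_singleton_iff, add_sub_add_left_eq_sub]
  grind

/-- The induced cycle `v 0, …, v (k - 1)`, with indices read modulo `k`. -/
def IsInducedCycle.toEmbedding [NeZero k] {v : ℕ → V} (hv : IsInducedCycle G k v) (hk : 2 ≤ k) :
    CycleEmbedding G k where
  toFun a := v a.val
  inj' a b hab := ZMod.val_injective k (hv.1 _ a.val_lt _ b.val_lt hab)
  map_rel_iff' {a b} := by
    have := circulantGraph_one_adj_natCast hk 0 a.val_lt b.val_lt
    rw [zero_add, zero_add, ZMod.natCast_zmod_val, ZMod.natCast_zmod_val] at this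
    exact (hv.2 _ a.val_lt _ b.val_lt).trans this.symm

lemma IsInducedCycle.range_toEmbedding [NeZero k] {v : ℕ → V} (hv : IsInducedCycle G k v)
    (hk : 2 ≤ k) : Set.range (hv.toEmbedding hk) = v '' Set.Iio k := by
  ext x
  constructor
  · rintro ⟨a, rfl⟩
    exact ⟨a.val, a.val_lt, rfl⟩
  · rintro ⟨i, hi, rfl⟩
    exact ⟨i, congrArg v (ZMod.val_cast_of_lt hi)⟩

/-- Negation as an automorphism of a circulant graph; on the cycle it is a reflection. -/
def circulantGraphNegIso {A : Type*} [AddCommGroup A] (s : Set A) :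
    SimpleGraph.circulantGraph s ≃g SimpleGraph.circulantGraph s where
  toEquiv := Equiv.neg A
  map_rel_iff' {a b} := by
    simp [SimpleGraph.circulantGraph_adj, neg_add_eq_sub, or_comm]

/-- The same cycle traversed in the opposite direction. -/
def CycleEmbedding.reverse (u : CycleEmbedding G k) : CycleEmbedding G k :=
  u.comp (circulantGraphNegIso {1}).toEmbedding

lemma CycleEmbedding.reverse_apply (u : CycleEmbedding G k) (a : ZMod k) : u.reverse a = u (-a) :=
  rfl

lemma CycleEmbedding.range_reverse (u : CycleEmbedding G k) :
    Set.range u.reverse = Set.range u :=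
  (Equiv.neg (ZMod k)).surjective.range_comp u

lemma ReadsFrom.isGoodTuple (hk : 2 ≤ k) {u : CycleEmbedding G k} {a : ZMod k} {z : ℕ → V}
    (hz : ReadsFrom u a z) : IsGoodTuple G k z := by
  refine ⟨fun i hi j hj hij => ?_, fun i hi j hj => ?_⟩
  · simp only [hz i hi, hz j hj] at hij
    exact CharP.natCast_injOn_Iio (ZMod k) k hi hj (add_left_cancel (u.injective hij))
  · simp only [hz i hi, hz j hj]
    exact u.map_adj_iff.trans (circulantGraph_one_adj_natCast hk a hi hj)

lemma pow_div_le_sum_wt [Fintype V] [NeZero k] (hk : 5 ≤ k) {u : CycleEmbedding G k}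
    {z : ZMod k → ℕ → V} (hz : ∀ a, ReadsFrom u a (z a)) :
    (k : ℝ) ^ k / (4 * (Fintype.card V : ℝ) ^ k) ≤ ∑ a, wt G k (z a) := by
  have hk0 : (0 : ℝ) < k := mod_cast (show 0 < k by omega)
  have hn0 : (0 : ℝ) < Fintype.card V := mod_cast Fintype.card_pos_iff.2 ⟨u 0⟩
  have hpos : ∀ a i, 0 < posWeight k i * nq G k (z a) i := fun a i =>
    mul_pos (posWeight_pos (by omega) i)
      (mod_cast nq_pos (by omega) ((hz a).isGoodTuple (by omega)) i)
  have hamgm := card_mul_inv_pow_le_sum_prod_inv (A := univ) (s := Icc 1 k)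
    (div_pos hn0 hk0) (fun a _ i _ => hpos a i) (by
      refine (sum_posWeight_mul_nq_le hk G hz).trans (le_of_eq ?_)
      rw [card_univ, ZMod.card, Nat.card_Icc, Nat.add_sub_cancel]
      field_simp)
  have hwt : ∀ a, ∏ i ∈ Icc 1 k, (posWeight k i * nq G k (z a) i)⁻¹ = 4 * k * wt G k (z a) := by
    intro a
    simp only [mul_inv, prod_mul_distrib, wt]
    rw [prod_inv_distrib (posWeight k), prod_posWeight (by omega), one_div, inv_inv]
  rw [card_univ, ZMod.card, Nat.card_Icc, Nat.add_sub_cancel, inv_div, div_pow] at hamgm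
  simp only [hwt, ← mul_sum] at hamgm
  refine le_of_mul_le_mul_left (le_trans (le_of_eq ?_) hamgm) (by positivity : 0 < 4 * (k : ℝ))
  field_simp

/-- The tuple that reads `u` from `a`; if `u` is an induced cycle, it is a good tuple. -/
def cycleTuple (u : ZMod k → V) (a : ZMod k) : Fin k → V :=
  fun q => u (a + (swap01 q : ℕ))

lemma readsFrom_cycleTuple (hk : 2 ≤ k) (u : ZMod k → V) (a : ZMod k) :
    ReadsFrom u a (tupFun (by omega) (cycleTuple u a)) := by
  intro i hi
  simp only [tupFun, cycleTuple, Nat.mod_eq_of_lt (swap01_lt hk hi), swap01_swap01]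

lemma range_cycleTuple (hk : 2 ≤ k) (u : ZMod k → V) (a : ZMod k) :
    Set.range (cycleTuple u a) = Set.range u := by
  have : NeZero k := ⟨by omega⟩
  refine Set.Subset.antisymm (Set.range_comp_subset_range (fun q : Fin k => _) u)
    (Set.range_subset_iff.2 fun b => ⟨⟨swap01 (b - a).val, swap01_lt hk (ZMod.val_lt _)⟩, ?_⟩)
  simp [cycleTuple, swap01_swap01]

lemma cycleTuple_injective (hk : 2 ≤ k) {u : ZMod k → V} (hu : Function.Injective u) :
    Function.Injective (cycleTuple u) := by
  intro a b hab
  have h1 := congrFun hab (⟨1, hk⟩ : Fin k)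
  exact hu (by simpa [cycleTuple, swap01] using h1)

lemma cycleTuple_ne_cycleTuple_reverse (hk : 3 ≤ k) (u : CycleEmbedding G k) (a b : ZMod k) :
    cycleTuple u a ≠ cycleTuple u.reverse b := by
  intro hab
  have h0 : a + 1 = -(b + 1) := by
    simpa [cycleTuple, swap01, u.reverse_apply] using congrFun hab (⟨0, by omega⟩ : Fin k)
  have h1 : a = -b := by
    simpa [cycleTuple, swap01, u.reverse_apply] using congrFun hab (⟨1, by omega⟩ : Fin k)
  refine zmod_natCast_ne_zero_of_lt two_pos hk ?_
  push_cast
  linear_combination h0 - h1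

/-- The `2 * k` good tuples with underlying cycle `u`: one for each direction and each starting
point. -/
def CycleEmbedding.goodTuples (u : CycleEmbedding G k) (hk : 3 ≤ k) :
    ZMod k ⊕ ZMod k ↪ (Fin k → V) where
  toFun := Sum.elim (cycleTuple u) (cycleTuple u.reverse)
  inj' := (cycleTuple_injective (by omega) u.injective).sumElim
    (cycleTuple_injective (by omega) u.reverse.injective) (cycleTuple_ne_cycleTuple_reverse hk u)

lemma CycleEmbedding.isGoodTuple_goodTuples (u : CycleEmbedding G k) (hk : 3 ≤ k)
    (s : ZMod k ⊕ ZMod k) : IsGoodTuple G k (tupFun (by omega) (u.goodTuples hk s)) := by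
  have hk2 : 2 ≤ k := by omega
  rcases s with a | a
  · exact (readsFrom_cycleTuple hk2 u a).isGoodTuple hk2
  · exact (readsFrom_cycleTuple hk2 u.reverse a).isGoodTuple hk2

lemma CycleEmbedding.range_goodTuples (u : CycleEmbedding G k) (hk : 3 ≤ k)
    (s : ZMod k ⊕ ZMod k) : Set.range (u.goodTuples hk s) = Set.range u := by
  rcases s with a | a
  · exact range_cycleTuple (by omega) u a
  · exact (range_cycleTuple (by omega) u.reverse a).trans u.range_reverse

lemma CycleEmbedding.pow_div_le_sum_wt_goodTuples [Fintype V] [NeZero k] (u : CycleEmbedding G k)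
    (hk : 5 ≤ k) :
    (k : ℝ) ^ k / (2 * (Fintype.card V : ℝ) ^ k)
      ≤ ∑ s, wt G k (tupFun (by omega) (u.goodTuples (by omega) s)) := by
  have hdir (w : CycleEmbedding G k) := pow_div_le_sum_wt hk (readsFrom_cycleTuple (by omega) w)
  rw [Fintype.sum_sum_type]
  refine le_trans (le_of_eq ?_) (add_le_add (hdir u) (hdir u.reverse))
  ring

end Cycles

/-- Let `G` be a graph on `n` vertices, `k ≥ 5`, and `C` an induced cycle of
length `k` in `G`, given by vertices `v 0, …, v (k-1)`. The sum of the weights `w(D)` over the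
`2k` good `k`-tuples `D` whose underlying induced cycle is `C` (equivalently, since the cycle
is induced, whose set of entries is the vertex set of `C`) is at least `k^k / (2 n^k)`. -/
theorem sum_weights_underlying_cycle_ge {V : Type} [Fintype V] (G : SimpleGraph V) (n k : ℕ)
    (hn : Fintype.card V = n) (hk : 5 ≤ k) (v : ℕ → V) (hv : IsInducedCycle G k v) :
    (k : ℝ) ^ k / (2 * (n : ℝ) ^ k)
      ≤ ∑ z ∈ Finset.univ.filter (fun z : Fin k → V =>
            IsGoodTuple G k (tupFun (by omega) z) ∧ Set.range z = v '' Set.Iio k),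
          wt G k (tupFun (by omega) z) := by
  subst hn
  have : NeZero k := ⟨by omega⟩
  have hk3 : 3 ≤ k := by omega
  let u := hv.toEmbedding (by omega)
  calc (k : ℝ) ^ k / (2 * (Fintype.card V : ℝ) ^ k)
      ≤ ∑ s, wt G k (tupFun (by omega) (u.goodTuples hk3 s)) :=
        u.pow_div_le_sum_wt_goodTuples hk
    _ = ∑ z ∈ univ.map (u.goodTuples hk3), wt G k (tupFun (by omega) z) := by rw [sum_map]
    _ ≤ _ := by
        refine sum_le_sum_of_subset_of_nonneg (fun z hz => ?_) fun z _ _ => wt_nonneg G k _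
        obtain ⟨s, -, rfl⟩ := mem_map.1 hz
        exact mem_filter.2 ⟨mem_univ _, u.isGoodTuple_goodTuples hk3 s,
          (u.range_goodTuples hk3 s).trans (hv.range_toEmbedding (by omega))⟩
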